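/- arXiv:2202.04634 — 2 statements merged into one kernel-verified Lean document; each statement's English description precedes it below -/
import Mathlib

section
/- Fix δ ∈ (0,1). Suppose 0 ≤ w ≤ B_{w,α} for all w ∈ W, |f(x)| ≤ B_{f,α} for 0 ≤ x ≤ B_{w,α}, and ‖v‖_∞ ≤ B_{v,α} for all v ∈ V. Then with probability at least 1−δ over the draw of the datasets, simultaneously for all v ∈ V and w ∈ W: |L̂_α(v,w) − L_α(v,w)| ≤ (α·B_{f,α} + B_{w,α}·B_{e,α})·√(2·log(4|V||W|/δ)/n) + (1−γ)·B_{v,α}·√(2·log(4|V|/δ)/n0), where B_{e,α} = (1+γ)·B_{v,α} + 1. -/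
open MeasureTheory
open scoped BigOperators ENNReal

namespace ProRL

/-- The discrete measure on a type induced by a real-valued weight function. -/
noncomputable def discMeasure {X : Type*} [MeasurableSpace X] (p : X → ℝ) : Measure X :=
  Measure.sum fun x => ENNReal.ofReal (p x) • Measure.dirac x

variable {S A : Type*} [Fintype S] [Fintype A]

/-- The `t`-step state-action distribution of policy `π` started from `μ0`. -/
noncomputable def saDist (P : S → A → S → ℝ) (μ0 : S → ℝ) (π : S → A → ℝ) :
    ℕ → S → A → ℝ
  | 0 => fun s a => μ0 s * π s a
  | t + 1 => fun s a =>
      (∑ s' : S, ∑ a' : A, saDist P μ0 π t s' a' * P s' a' s) * π s a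

/-- The discounted state-action occupancy `d^π(s,a)`. -/
noncomputable def occ (P : S → A → S → ℝ) (μ0 : S → ℝ) (γ : ℝ) (π : S → A → ℝ)
    (s : S) (a : A) : ℝ :=
  (1 - γ) * ∑' t : ℕ, γ ^ t * saDist P μ0 π t s a

/-- The (normalized) expected discounted return `J(π) = E_{d^π}[r]`. -/
noncomputable def Jret (P : S → A → S → ℝ) (r : S → A → ℝ) (μ0 : S → ℝ) (γ : ℝ)
    (π : S → A → ℝ) : ℝ :=
  ∑ s : S, ∑ a : A, occ P μ0 γ π s a * r s a

/-- `π` is a (stationary, stochastic) policy. -/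
def IsPolicy (π : S → A → ℝ) : Prop :=
  (∀ s a, 0 ≤ π s a) ∧ ∀ s, ∑ a : A, π s a = 1

/-- The Bellman residual `e_v(s,a) = r(s,a) + γ ∑_{s'} P(s'|s,a) v(s') − v(s)`. -/
noncomputable def eV (P : S → A → S → ℝ) (r : S → A → ℝ) (γ : ℝ) (v : S → ℝ)
    (s : S) (a : A) : ℝ :=
  r s a + γ * ∑ s' : S, P s a s' * v s' - v s

/-- The population Lagrangian `L_α(v,w)`. -/
noncomputable def Lag (P : S → A → S → ℝ) (r : S → A → ℝ) (μ0 : S → ℝ) (γ : ℝ)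
    (dD : S → A → ℝ) (f : ℝ → ℝ) (α : ℝ) (v : S → ℝ) (w : S → A → ℝ) : ℝ :=
  (1 - γ) * ∑ s : S, μ0 s * v s
    - α * ∑ s : S, ∑ a : A, dD s a * f (w s a)
    + ∑ s : S, ∑ a : A, dD s a * (w s a * eV P r γ v s a)

/-- The empirical Lagrangian `L̂_α(v,w)` built from the transition dataset `D`
(`D i = ((sᵢ,aᵢ), s'ᵢ)`, with `rᵢ = r sᵢ aᵢ`) and initial-state dataset `D0`. -/
noncomputable def empLag (r : S → A → ℝ) (γ : ℝ) (f : ℝ → ℝ) (α : ℝ) {n n0 : ℕ}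
    (D : Fin n → (S × A) × S) (D0 : Fin n0 → S) (v : S → ℝ) (w : S → A → ℝ) : ℝ :=
  (1 - γ) * ((n0 : ℝ)⁻¹ * ∑ j : Fin n0, v (D0 j))
    - α * ((n : ℝ)⁻¹ * ∑ i : Fin n, f (w (D i).1.1 (D i).1.2))
    + (n : ℝ)⁻¹ * ∑ i : Fin n,
        w (D i).1.1 (D i).1.2 *
          (r (D i).1.1 (D i).1.2 + γ * v (D i).2 - v (D i).1.1)

/-- Per-state normalization of a state-action weight into a policy
(uniform where the state marginal is not positive). -/
noncomputable def normPolicy (d : S → A → ℝ) (s : S) (a : A) : ℝ :=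
  if 0 < ∑ a' : A, d s a' then d s a / ∑ a' : A, d s a'
  else (Fintype.card A : ℝ)⁻¹

/-- Policy extraction from a density ratio `w` and a behavior policy `piD`
(uniform where the normalizer vanishes). -/
noncomputable def extractPolicy (piD w : S → A → ℝ) (s : S) (a : A) : ℝ :=
  if 0 < ∑ a' : A, w s a' * piD s a' then
    w s a * piD s a / ∑ a' : A, w s a' * piD s a'
  else (Fintype.card A : ℝ)⁻¹

/-- Behavior policy `π_D(a|s)` obtained from the data distribution `d^D`. -/
noncomputable def behPolicy (dD : S → A → ℝ) : S → A → ℝ := normPolicy dD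

/-- The state-action measure `d(s,a) = w(s,a)·d^D(s,a)`. -/
noncomputable def dstar (dD w : S → A → ℝ) : S → A → ℝ := fun s a => w s a * dD s a

/-- The weighted `L²(d^D)` norm of a state-action function. -/
noncomputable def l2nrm (dD g : S → A → ℝ) : ℝ :=
  Real.sqrt (∑ s : S, ∑ a : A, dD s a * g s a ^ 2)

/-- `‖π(·|s) − π'(·|s)‖₁`. -/
noncomputable def l1Pol (π π' : S → A → ℝ) (s : S) : ℝ := ∑ a : A, |π s a - π' s a|

/-- `E_{s ∼ d}[‖π(·|s) − π'(·|s)‖₁]` where `d` is a state-action distribution. -/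
noncomputable def expL1 (d π π' : S → A → ℝ) : ℝ :=
  ∑ s : S, (∑ a : A, d s a) * l1Pol π π' s

/-- The statistical error term `ε_stat`. -/
noncomputable def epsStat (γ α Bv Bf Bw Be δ : ℝ) (nV nW n n0 : ℕ) : ℝ :=
  (1 - γ) * Bv * Real.sqrt (2 * Real.log (4 * (nV : ℝ) / δ) / (n0 : ℝ))
    + (α * Bf + Bw * Be) *
        Real.sqrt (2 * Real.log (4 * ((nV : ℝ) * (nW : ℝ)) / δ) / (n : ℝ))

/-- The Bellman flow equations for a state-action measure `d`. -/
def BellmanFlow (P : S → A → S → ℝ) (μ0 : S → ℝ) (γ : ℝ) (d : S → A → ℝ) : Prop :=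
  ∀ s : S, ∑ a : A, d s a
    = (1 - γ) * μ0 s + γ * ∑ s' : S, ∑ a' : A, P s' a' s * d s' a'

/-- `(v,w)` is a saddle point of `max_{w ≥ 0} min_v L_α(v,w)`. -/
def IsSaddle (P : S → A → S → ℝ) (r : S → A → ℝ) (μ0 : S → ℝ) (γ : ℝ)
    (dD : S → A → ℝ) (f : ℝ → ℝ) (α : ℝ) (v : S → ℝ) (w : S → A → ℝ) : Prop :=
  (∀ s a, 0 ≤ w s a) ∧
  (∀ v' : S → ℝ, Lag P r μ0 γ dD f α v w ≤ Lag P r μ0 γ dD f α v' w) ∧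
  (∀ w' : S → A → ℝ, (∀ s a, 0 ≤ w' s a) →
    Lag P r μ0 γ dD f α v w' ≤ Lag P r μ0 γ dD f α v w)

/-- `(v,w)` is a saddle point of `max_{0 ≤ w ≤ Bw} min_v L_α(v,w)` (constrained LP). -/
def IsSaddleB (P : S → A → S → ℝ) (r : S → A → ℝ) (μ0 : S → ℝ) (γ : ℝ)
    (dD : S → A → ℝ) (f : ℝ → ℝ) (α Bw : ℝ) (v : S → ℝ) (w : S → A → ℝ) : Prop :=
  (∀ s a, 0 ≤ w s a ∧ w s a ≤ Bw) ∧
  (∀ v' : S → ℝ, Lag P r μ0 γ dD f α v w ≤ Lag P r μ0 γ dD f α v' w) ∧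
  (∀ w' : S → A → ℝ, (∀ s a, 0 ≤ w' s a ∧ w' s a ≤ Bw) →
    Lag P r μ0 γ dD f α v w' ≤ Lag P r μ0 γ dD f α v w)

/-- `(vhat, what)` is an exact max-min point of the empirical Lagrangian over `V × W`:
`vhat ∈ argmin_{v ∈ V} L̂(v, what)` and `what ∈ argmax_{w ∈ W} min_{v ∈ V} L̂(v, w)`. -/
def IsProRLOutput (r : S → A → ℝ) (γ : ℝ) (f : ℝ → ℝ) (α : ℝ)
    (V : Finset (S → ℝ)) (W : Finset (S → A → ℝ)) {n n0 : ℕ}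
    (D : Fin n → (S × A) × S) (D0 : Fin n0 → S)
    (vhat : S → ℝ) (what : S → A → ℝ) : Prop :=
  vhat ∈ V ∧ what ∈ W ∧
  (∀ v ∈ V, empLag r γ f α D D0 vhat what ≤ empLag r γ f α D D0 v what) ∧
  ∀ w ∈ W, ∀ vw ∈ V,
    (∀ v ∈ V, empLag r γ f α D D0 vw w ≤ empLag r γ f α D D0 v w) →
      empLag r γ f α D D0 vw w ≤ empLag r γ f α D D0 vhat what

/-- Weight of a transition tuple `((s,a),s')` under `(s,a) ∼ d^D`, `s' ∼ P(·|s,a)`. -/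
noncomputable def tupleWeight (P : S → A → S → ℝ) (dD : S → A → ℝ)
    (x : (S × A) × S) : ℝ :=
  dD x.1.1 x.1.2 * P x.1.1 x.1.2 x.2

/-- The joint law of the transition dataset `D` (i.i.d. from `d^D ⊗ P`) and the
initial-state dataset `D0` (i.i.d. from `μ0`). -/
noncomputable def dataMeasure [MeasurableSpace S] [MeasurableSpace A]
    (P : S → A → S → ℝ) (dD : S → A → ℝ) (μ0 : S → ℝ) (n n0 : ℕ) :
    Measure ((Fin n → (S × A) × S) × (Fin n0 → S)) :=
  (Measure.pi fun _ : Fin n => discMeasure (tupleWeight P dD)).prod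
    (Measure.pi fun _ : Fin n0 => discMeasure μ0)

/-- The joint law of datasets `D1`, `D2` (both i.i.d. from `d^D ⊗ P`) and `D0`
(i.i.d. from `μ0`), used by PRO-RL-BC. -/
noncomputable def dataMeasure3 [MeasurableSpace S] [MeasurableSpace A]
    (P : S → A → S → ℝ) (dD : S → A → ℝ) (μ0 : S → ℝ) (n1 n2 n0 : ℕ) :
    Measure ((Fin n1 → (S × A) × S) × (Fin n2 → (S × A) × S) × (Fin n0 → S)) :=
  (Measure.pi fun _ : Fin n1 => discMeasure (tupleWeight P dD)).prod
    ((Measure.pi fun _ : Fin n2 => discMeasure (tupleWeight P dD)).prod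
      (Measure.pi fun _ : Fin n0 => discMeasure μ0))

/-- `v` is the optimal value function: it satisfies the Bellman optimality equation. -/
def IsOptValue [Nonempty A] (P : S → A → S → ℝ) (r : S → A → ℝ) (γ : ℝ)
    (v : S → ℝ) : Prop :=
  ∀ s : S, v s = Finset.univ.sup' Finset.univ_nonempty
    (fun a : A => r s a + γ * ∑ s' : S, P s a s' * v s')

/-- Basic assumptions on the MDP, the regularizer-free data, and the data distribution. -/
structure MDPAssumptions (P : S → A → S → ℝ) (r : S → A → ℝ) (μ0 : S → ℝ) (γ : ℝ)
    (dD : S → A → ℝ) : Prop where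
  P_nonneg : ∀ s a s', 0 ≤ P s a s'
  P_sum : ∀ s a, ∑ s' : S, P s a s' = 1
  r_nonneg : ∀ s a, 0 ≤ r s a
  r_le_one : ∀ s a, r s a ≤ 1
  γ_nonneg : 0 ≤ γ
  γ_lt_one : γ < 1
  μ0_pos : ∀ s, 0 < μ0 s
  μ0_sum : ∑ s : S, μ0 s = 1
  dD_nonneg : ∀ s a, 0 ≤ dD s a
  dD_sum : ∑ s : S, ∑ a : A, dD s a = 1

/-- Regularity of the regularizer `f`: continuously differentiable with derivative `f'`,
`M_f`-strongly convex, and with `|f'| ≤ Bf'`, `|f| ≤ Bf` on `[0, Bw]`. -/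
structure RegAssumptions (f f' : ℝ → ℝ) (Mf Bw Bf' Bf : ℝ) : Prop where
  deriv : ∀ x, HasDerivAt f (f' x) x
  strong : StrongConvexOn Set.univ Mf f
  Mf_pos : 0 < Mf
  f'_bdd : ∀ x, 0 ≤ x → x ≤ Bw → |f' x| ≤ Bf'
  f_bdd : ∀ x, 0 ≤ x → x ≤ Bw → |f x| ≤ Bf

/-- `w` is an optimal density ratio of the unregularized LP (the set `W*₀`). -/
def OptRatio (P : S → A → S → ℝ) (r : S → A → ℝ) (μ0 : S → ℝ) (γ : ℝ)
    (dD : S → A → ℝ) (w : S → A → ℝ) : Prop :=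
  (∀ s a, 0 ≤ w s a) ∧ BellmanFlow P μ0 γ (dstar dD w) ∧
  ∀ w' : S → A → ℝ, (∀ s a, 0 ≤ w' s a) → BellmanFlow P μ0 γ (dstar dD w') →
    ∑ s : S, ∑ a : A, dstar dD w' s a * r s a
      ≤ ∑ s : S, ∑ a : A, dstar dD w s a * r s a

section Concentration

open ProbabilityTheory

/-- One-sided Hoeffding bound for the centred sum of i.i.d. coordinates under a product measure. -/
theorem pi_real_sum_sub_integral_ge_le {X : Type*} [MeasurableSpace X] (μ : Measure X)
    [IsProbabilityMeasure μ] {g : X → ℝ} (hg : Measurable g) {B : ℝ} (hB : 0 < B)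
    (hgB : ∀ x, |g x| ≤ B) {m : ℕ} (hm : 0 < m) {ε : ℝ} (hε : 0 ≤ ε) :
    (Measure.pi fun _ : Fin m => μ).real {D | m * ε ≤ ∑ i, (g (D i) - ∫ x, g x ∂μ)}
      ≤ Real.exp (-(m * ε ^ 2 / (2 * B ^ 2))) := by
  have hm' : (0 : ℝ) < m := by exact_mod_cast hm
  have hsub : HasSubgaussianMGF (fun x => g x - ∫ x, g x ∂μ) ((‖B - -B‖₊ / 2) ^ 2) μ :=
    hasSubgaussianMGF_of_mem_Icc hg.aemeasurable
      (Filter.Eventually.of_forall fun x => abs_le.mp (hgB x))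
  have hind : iIndepFun (fun (i : Fin m) (D : Fin m → X) => g (D i) - ∫ x, g x ∂μ)
      (Measure.pi fun _ : Fin m => μ) :=
    iIndepFun_pi (X := fun _ x => g x - ∫ x, g x ∂μ) fun _ => (hg.sub_const _).aemeasurable
  have hsub' : ∀ i ∈ (Finset.univ : Finset (Fin m)),
      HasSubgaussianMGF (fun D : Fin m → X => g (D i) - ∫ x, g x ∂μ) ((‖B - -B‖₊ / 2) ^ 2)
        (Measure.pi fun _ : Fin m => μ) := fun i _ =>
    HasSubgaussianMGF.of_map (X := fun x => g x - ∫ x, g x ∂μ) (Y := fun D : Fin m → X => D i)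
      (measurable_pi_apply i).aemeasurable
      (by rwa [(measurePreserving_eval (fun _ : Fin m => μ) i).map_eq])
  refine (HasSubgaussianMGF.measure_sum_ge_le_of_iIndepFun hind hsub' (by positivity)).trans_eq ?_
  have hc : ‖B - -B‖ / 2 = B := by
    rw [Real.norm_eq_abs, abs_of_nonneg] <;> linarith
  simp only [Finset.sum_const, Finset.card_univ, Fintype.card_fin, nsmul_eq_mul, NNReal.coe_mul,
    NNReal.coe_natCast, NNReal.coe_pow, NNReal.coe_div, coe_nnnorm, NNReal.coe_ofNat, hc]
  congr 1
  field_simp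

/-- Two-sided Hoeffding bound for empirical means of a bounded function. -/
theorem pi_empirical_mean_deviation_le {X : Type*} [MeasurableSpace X] (μ : Measure X)
    [IsProbabilityMeasure μ] {g : X → ℝ} (hg : Measurable g) {B : ℝ}
    (hgB : ∀ x, |g x| ≤ B) {m : ℕ} (hm : 0 < m) {L : ℝ} (hL : 0 ≤ L) :
    (Measure.pi fun _ : Fin m => μ)
        {D | B * √(2 * L / m) < |(m : ℝ)⁻¹ * ∑ i, g (D i) - ∫ x, g x ∂μ|}
      ≤ ENNReal.ofReal (2 * Real.exp (-L)) := by
  have hm' : (0 : ℝ) < m := by exact_mod_cast hm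
  obtain ⟨x₀⟩ : Nonempty X := nonempty_of_isProbabilityMeasure μ
  rcases ((abs_nonneg _).trans (hgB x₀)).eq_or_lt with rfl | hB
  · have hg0 : g = 0 := funext fun x => abs_nonpos_iff.mp (hgB x)
    simp [hg0]
  set ε := B * √(2 * L / m) with hεdef
  have hε : 0 ≤ ε := by positivity
  have hexp : (m : ℝ) * ε ^ 2 / (2 * B ^ 2) = L := by
    rw [hεdef, mul_pow, Real.sq_sqrt (by positivity)]
    field_simp
  have hupper := pi_real_sum_sub_integral_ge_le μ hg hB hgB hm hε
  have hlower := pi_real_sum_sub_integral_ge_le μ hg.neg hB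
    (fun x => by simpa using hgB x) hm hε
  rw [hexp] at hupper hlower
  rw [← ofReal_measureReal]
  refine ENNReal.ofReal_le_ofReal ?_
  rw [two_mul]
  refine (measureReal_mono ?_).trans
    ((measureReal_union_le _ _).trans (add_le_add hupper hlower))
  intro D hD
  have hmean : (m : ℝ) * ((m : ℝ)⁻¹ * ∑ i, g (D i) - ∫ x, g x ∂μ)
      = ∑ i, (g (D i) - ∫ x, g x ∂μ) := by
    simp only [Finset.sum_sub_distrib, Finset.sum_const, Finset.card_univ, Fintype.card_fin,
      nsmul_eq_mul]
    field_simp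
  rcases lt_abs.mp (show ε < _ from hD) with h | h
  · left
    rw [Set.mem_ofPred_eq, ← hmean]
    gcongr
  · right
    have hneg : ∑ i, ((-g) (D i) - ∫ x, (-g) x ∂μ) = -∑ i, (g (D i) - ∫ x, g x ∂μ) := by
      simp only [Pi.neg_apply, integral_neg, ← Finset.sum_neg_distrib]
      exact Finset.sum_congr rfl fun _ _ => by ring
    rw [Set.mem_ofPred_eq, hneg, ← hmean, ← mul_neg]
    gcongr

/-- Uniform deviation bound over a finite family of functions sharing a common bound. -/
theorem pi_uniform_deviation_le {X ι : Type*} [MeasurableSpace X] (μ : Measure X)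
    [IsProbabilityMeasure μ] (F : Finset ι) {g : ι → X → ℝ} (hg : ∀ k, Measurable (g k)) {B : ℝ}
    (hgB : ∀ k ∈ F, ∀ x, |g k x| ≤ B) {m : ℕ} (hm : 0 < m) {δ : ℝ} (hδ0 : 0 < δ) (hδ1 : δ < 1) :
    (Measure.pi fun _ : Fin m => μ)
        {D | ∃ k ∈ F, B * √(2 * Real.log (4 * (F.card : ℝ) / δ) / m)
          < |(m : ℝ)⁻¹ * ∑ i, g k (D i) - ∫ x, g k x ∂μ|}
      ≤ ENNReal.ofReal (δ / 2) := by
  rcases F.eq_empty_or_nonempty with rfl | hF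
  · simp
  have hcard : (1 : ℝ) ≤ F.card := by exact_mod_cast hF.card_pos
  have hL : 0 ≤ Real.log (4 * (F.card : ℝ) / δ) :=
    Real.log_nonneg (by rw [le_div_iff₀ hδ0]; linarith)
  have hexp : F.card * (2 * Real.exp (-Real.log (4 * (F.card : ℝ) / δ))) = δ / 2 := by
    rw [Real.exp_neg, Real.exp_log (by positivity)]
    field_simp
    norm_num
  have hunion : {D : Fin m → X | ∃ k ∈ F, B * √(2 * Real.log (4 * (F.card : ℝ) / δ) / m)
          < |(m : ℝ)⁻¹ * ∑ i, g k (D i) - ∫ x, g k x ∂μ|}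
      = ⋃ k ∈ F, {D | B * √(2 * Real.log (4 * (F.card : ℝ) / δ) / m)
          < |(m : ℝ)⁻¹ * ∑ i, g k (D i) - ∫ x, g k x ∂μ|} := by
    ext D
    simp
  rw [hunion]
  refine (measure_biUnion_finset_le _ _).trans ((Finset.sum_le_sum fun k hk =>
    pi_empirical_mean_deviation_le μ (hg k) (hgB k hk) hm hL).trans_eq ?_)
  rw [Finset.sum_const, nsmul_eq_mul, ← ENNReal.ofReal_natCast,
    ← ENNReal.ofReal_mul (by positivity), hexp]

end Concentration

section DiscreteMeasure

variable {X : Type*} [Fintype X] [MeasurableSpace X] [MeasurableSingletonClass X]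

theorem discMeasure_singleton (p : X → ℝ) (x : X) :
    discMeasure p {x} = ENNReal.ofReal (p x) := by
  classical
  simp [discMeasure, Set.indicator_apply]

theorem isProbabilityMeasure_discMeasure {p : X → ℝ} (hp : ∀ x, 0 ≤ p x) (hsum : ∑ x, p x = 1) :
    IsProbabilityMeasure (discMeasure p) := by
  refine ⟨?_⟩
  rw [← Finset.coe_univ, ← sum_measure_singleton]
  simp only [discMeasure_singleton]
  rw [← ENNReal.ofReal_sum_of_nonneg fun x _ => hp x, hsum, ENNReal.ofReal_one]

theorem integral_discMeasure {p : X → ℝ} [IsFiniteMeasure (discMeasure p)] (hp : ∀ x, 0 ≤ p x)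
    (g : X → ℝ) : ∫ x, g x ∂discMeasure p = ∑ x, p x * g x := by
  rw [integral_fintype .of_finite]
  simp [measureReal_def, discMeasure_singleton, ENNReal.toReal_ofReal (hp _)]

end DiscreteMeasure

section Lagrangian

/-- The contribution of a single transition `((s,a),s')` to the empirical Lagrangian. -/
def transitionLoss (r : S → A → ℝ) (γ : ℝ) (f : ℝ → ℝ) (α : ℝ) (v : S → ℝ) (w : S → A → ℝ)
    (x : (S × A) × S) : ℝ :=
  w x.1.1 x.1.2 * (r x.1.1 x.1.2 + γ * v x.2 - v x.1.1) - α * f (w x.1.1 x.1.2)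

theorem empLag_eq {S A : Type*} (r : S → A → ℝ) (γ : ℝ) (f : ℝ → ℝ) (α : ℝ) {n n0 : ℕ}
    (D : Fin n → (S × A) × S) (D0 : Fin n0 → S) (v : S → ℝ) (w : S → A → ℝ) :
    empLag r γ f α D D0 v w = (1 - γ) * ((n0 : ℝ)⁻¹ * ∑ j, v (D0 j))
      + (n : ℝ)⁻¹ * ∑ i, transitionLoss r γ f α v w (D i) := by
  simp only [empLag, transitionLoss, Finset.sum_sub_distrib, ← Finset.mul_sum]
  ring

theorem sum_tupleWeight_mul_transitionLoss {P : S → A → S → ℝ} (hP : ∀ s a, ∑ s', P s a s' = 1)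
    (r : S → A → ℝ) (γ : ℝ) (dD : S → A → ℝ) (f : ℝ → ℝ) (α : ℝ) (v : S → ℝ) (w : S → A → ℝ) :
    ∑ x, tupleWeight P dD x * transitionLoss r γ f α v w x
      = ∑ s, ∑ a, dD s a * (w s a * eV P r γ v s a) - α * ∑ s, ∑ a, dD s a * f (w s a) := by
  simp only [Fintype.sum_prod_type, Finset.mul_sum, ← Finset.sum_sub_distrib]
  refine Finset.sum_congr rfl fun s _ => Finset.sum_congr rfl fun a _ => ?_
  have hsplit : ∀ s', tupleWeight P dD ((s, a), s') * transitionLoss r γ f α v w ((s, a), s')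
      = dD s a * (w s a * (r s a - v s) - α * f (w s a)) * P s a s'
        + dD s a * w s a * γ * (P s a s' * v s') := fun s' => by
    simp only [tupleWeight, transitionLoss]
    ring
  simp only [hsplit, Finset.sum_add_distrib, ← Finset.mul_sum, hP, eV]
  ring

theorem abs_transitionLoss_le {S A : Type*} {r : S → A → ℝ} {γ : ℝ} {f : ℝ → ℝ} {α Bw Bf Bv : ℝ}
    {v : S → ℝ} {w : S → A → ℝ} (hr0 : ∀ s a, 0 ≤ r s a) (hr1 : ∀ s a, r s a ≤ 1) (hγ : 0 ≤ γ)
    (hα : 0 ≤ α) (hw : ∀ s a, 0 ≤ w s a ∧ w s a ≤ Bw)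
    (hf : ∀ x, 0 ≤ x → x ≤ Bw → |f x| ≤ Bf) (hv : ∀ s, |v s| ≤ Bv) (x : (S × A) × S) :
    |transitionLoss r γ f α v w x| ≤ α * Bf + Bw * ((1 + γ) * Bv + 1) := by
  obtain ⟨⟨s, a⟩, s'⟩ := x
  obtain ⟨hw0, hwB⟩ := hw s a
  have hres : |r s a + γ * v s' - v s| ≤ (1 + γ) * Bv + 1 := by
    obtain ⟨h1, h2⟩ := abs_le.mp (hv s)
    obtain ⟨h3, h4⟩ := abs_le.mp (hv s')
    have h5 := mul_le_mul_of_nonneg_left h3 hγ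
    have h6 := mul_le_mul_of_nonneg_left h4 hγ
    have h7 := hr0 s a
    have h8 := hr1 s a
    rw [abs_le]
    constructor <;> linarith
  calc |w s a * (r s a + γ * v s' - v s) - α * f (w s a)|
      ≤ |w s a * (r s a + γ * v s' - v s)| + |α * f (w s a)| := abs_sub _ _
    _ = α * |f (w s a)| + w s a * |r s a + γ * v s' - v s| := by
        rw [abs_mul, abs_mul, abs_of_nonneg hw0, abs_of_nonneg hα, add_comm]
    _ ≤ α * Bf + Bw * ((1 + γ) * Bv + 1) := by
        gcongr
        · exact hf _ hw0 hwB
        · exact hw0.trans hwB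

end Lagrangian

/-- Lemma 6: uniform concentration of the empirical Lagrangian. -/
theorem stmt14
    {S A : Type*} [Fintype S] [Fintype A] [Nonempty S] [Nonempty A]
    [MeasurableSpace S] [MeasurableSpace A]
    [MeasurableSingletonClass S] [MeasurableSingletonClass A]
    (P : S → A → S → ℝ) (r : S → A → ℝ) (μ0 : S → ℝ) (γ : ℝ) (dD : S → A → ℝ)
    (hMDP : MDPAssumptions P r μ0 γ dD)
    (f : ℝ → ℝ) (α δ : ℝ) (hα : 0 ≤ α) (hδ0 : 0 < δ) (hδ1 : δ < 1)
    (Bw Bf Bv Be : ℝ)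
    (hBe : Be = (1 + γ) * Bv + 1)
    (V : Finset (S → ℝ)) (W : Finset (S → A → ℝ))
    (hA4 : ∀ w ∈ W, ∀ s a, 0 ≤ w s a ∧ w s a ≤ Bw)
    (hfB : ∀ x, 0 ≤ x → x ≤ Bw → |f x| ≤ Bf)
    (hA6 : ∀ v ∈ V, ∀ s, |v s| ≤ Bv)
    (n n0 : ℕ) (hn : 0 < n) (hn0 : 0 < n0) :
    1 - ENNReal.ofReal δ ≤
      dataMeasure P dD μ0 n n0 {ω |
        ∀ v ∈ V, ∀ w ∈ W,
          |empLag r γ f α ω.1 ω.2 v w - Lag P r μ0 γ dD f α v w|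
            ≤ (α * Bf + Bw * Be) *
                Real.sqrt (2 * Real.log (4 * ((V.card : ℝ) * (W.card : ℝ)) / δ) / (n : ℝ))
              + (1 - γ) * Bv *
                Real.sqrt (2 * Real.log (4 * (V.card : ℝ) / δ) / (n0 : ℝ)) } := by
  subst hBe
  have hμ0 : ∀ s, 0 ≤ μ0 s := fun s => (hMDP.μ0_pos s).le
  have htuple : ∀ x, 0 ≤ tupleWeight P dD x := fun x =>
    mul_nonneg (hMDP.dD_nonneg _ _) (hMDP.P_nonneg _ _ _)
  have : IsProbabilityMeasure (discMeasure μ0) :=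
    isProbabilityMeasure_discMeasure hμ0 hMDP.μ0_sum
  have : IsProbabilityMeasure (discMeasure (tupleWeight P dD)) := by
    refine isProbabilityMeasure_discMeasure htuple ?_
    simp only [Fintype.sum_prod_type, tupleWeight, ← Finset.mul_sum, hMDP.P_sum, mul_one,
      hMDP.dD_sum]
  have : IsProbabilityMeasure (dataMeasure P dD μ0 n n0) := by
    unfold dataMeasure
    infer_instance
  have hD := pi_uniform_deviation_le (discMeasure (tupleWeight P dD)) (V ×ˢ W)
    (g := fun k => transitionLoss r γ f α k.1 k.2) (fun _ => measurable_of_finite _)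
    (fun k hk => abs_transitionLoss_le hMDP.r_nonneg hMDP.r_le_one hMDP.γ_nonneg hα
      (hA4 _ (Finset.mem_product.mp hk).2) hfB (hA6 _ (Finset.mem_product.mp hk).1))
    hn hδ0 hδ1
  have hD0 := pi_uniform_deviation_le (discMeasure μ0) V (g := fun v => v)
    (fun _ => measurable_of_finite _) hA6 hn0 hδ0 hδ1
  set badD : Set (Fin n → (S × A) × S) := {D | ∃ k ∈ V ×ˢ W, _} with hbadD
  set badD0 : Set (Fin n0 → S) := {D | ∃ k ∈ V, _} with hbadD0
  have hbad : dataMeasure P dD μ0 n n0 (Prod.fst ⁻¹' badD ∪ Prod.snd ⁻¹' badD0)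
      ≤ ENNReal.ofReal δ := by
    refine (measure_union_le _ _).trans ?_
    rw [← add_halves δ, ENNReal.ofReal_add (by positivity) (by positivity)]
    refine add_le_add ?_ ?_
    · exact (measurePreserving_fst.measure_preimage
        (Set.toFinite badD).measurableSet.nullMeasurableSet).trans_le hD
    · exact (measurePreserving_snd.measure_preimage
        (Set.toFinite badD0).measurableSet.nullMeasurableSet).trans_le hD0
  refine (tsub_le_tsub_left hbad 1).trans ?_
  rw [← prob_compl_eq_one_sub (Set.toFinite _).measurableSet]
  refine measure_mono fun ω hω v hv w hw => ?_
  rw [Set.mem_compl_iff, Set.mem_union, not_or] at hω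
  obtain ⟨hω1, hω2⟩ := hω
  simp only [hbadD, hbadD0, Set.mem_preimage, Set.mem_ofPred_eq, not_exists, not_and, not_lt]
    at hω1 hω2
  have hdev := hω1 (v, w) (Finset.mk_mem_product hv hw)
  have hdev0 := hω2 v hv
  rw [integral_discMeasure htuple, sum_tupleWeight_mul_transitionLoss hMDP.P_sum,
    Finset.card_product, Nat.cast_mul] at hdev
  rw [integral_discMeasure hμ0] at hdev0
  have hγ : 0 ≤ 1 - γ := by linarith [hMDP.γ_lt_one]
  rw [empLag_eq, Lag]
  calc _ = |((n : ℝ)⁻¹ * ∑ i, transitionLoss r γ f α v w (ω.1 i)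
          - (∑ s, ∑ a, dD s a * (w s a * eV P r γ v s a) - α * ∑ s, ∑ a, dD s a * f (w s a)))
        + (1 - γ) * ((n0 : ℝ)⁻¹ * ∑ j, v (ω.2 j) - ∑ s, μ0 s * v s)| := by
        congr 1
        ring
    _ ≤ _ := (abs_add_le _ _).trans ?_
  rw [abs_mul, abs_of_nonneg hγ, mul_assoc (1 - γ)]
  gcongr

end ProRL
end

section
/- Let d^D be a distribution on S×A with conditionals π_D(a|s), let w*: S×A → ℝ₊ be such that d*(s,a) = w*(s,a)·d^D(s,a) is a probability distribution on S×A with induced policy π*(a|s) = d*(s,a)/Σ_{a'} d*(s,a') (uniform when the denominator is 0), and let ŵ: S×A → ℝ₊ be arbitrary with extracted policy π̂(a|s) = ŵ(s,a)π_D(a|s)/Σ_{a'} ŵ(s,a')π_D(a'|s) (uniform when the denominator is 0). Then E_{s∼d*}[‖π*(·|s) − π̂(·|s)‖₁] ≤ 2·‖ŵ − w*‖_{2,d^D}. -/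
open MeasureTheory
open scoped BigOperators ENNReal

namespace ProRL

variable {S A : Type*} [Fintype S] [Fintype A]

/-- A nonnegative weight is its state marginal times its normalization. -/
lemma sum_mul_normPolicy {S A : Type*} [Fintype A] {d : S → A → ℝ} (hd : ∀ s a, 0 ≤ d s a)
    (s : S) (a : A) : (∑ a' : A, d s a') * normPolicy d s a = d s a := by
  unfold normPolicy
  split_ifs with h
  · field_simp
  · have h0 : ∑ a' : A, d s a' = 0 :=
      le_antisymm (not_lt.1 h) (Finset.sum_nonneg fun a' _ => hd s a')
    have := (Finset.sum_eq_zero_iff_of_nonneg fun a' _ => hd s a').1 h0 a (Finset.mem_univ a)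
    rw [h0, this, zero_mul]

lemma normPolicy_isPolicy {S A : Type*} [Fintype A] [Nonempty A] {d : S → A → ℝ}
    (hd : ∀ s a, 0 ≤ d s a) : IsPolicy (normPolicy d) := by
  refine ⟨fun s a => ?_, fun s => ?_⟩
  · unfold normPolicy
    split_ifs with h
    · exact div_nonneg (hd s a) h.le
    · positivity
  · unfold normPolicy
    split_ifs with h
    · rw [← Finset.sum_div, div_self h.ne']
    · simp

/-- Normalization is Lipschitz in `ℓ¹`, relative to the mass of the first argument. -/
lemma sum_mul_l1Pol_normPolicy_le {S A : Type*} [Fintype A] [Nonempty A]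
    {p q : S → A → ℝ} (hp : ∀ s a, 0 ≤ p s a) (hq : ∀ s a, 0 ≤ q s a) (s : S) :
    (∑ a : A, p s a) * l1Pol (normPolicy p) (normPolicy q) s
      ≤ 2 * ∑ a : A, |q s a - p s a| := by
  obtain ⟨hn0, hn1⟩ := normPolicy_isPolicy hq
  have hmass : |∑ a : A, q s a - ∑ a : A, p s a| ≤ ∑ a : A, |q s a - p s a| := by
    rw [← Finset.sum_sub_distrib]
    exact Finset.abs_sum_le_sum_abs _ _
  have hpoint (a : A) : (∑ a' : A, p s a') * |normPolicy p s a - normPolicy q s a|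
      ≤ |q s a - p s a| + |∑ a' : A, q s a' - ∑ a' : A, p s a'| * normPolicy q s a := by
    have hsplit : (∑ a' : A, p s a') * (normPolicy p s a - normPolicy q s a)
        = (p s a - q s a) + (∑ a' : A, q s a' - ∑ a' : A, p s a') * normPolicy q s a := by
      linear_combination sum_mul_normPolicy hp s a - sum_mul_normPolicy hq s a
    calc (∑ a' : A, p s a') * |normPolicy p s a - normPolicy q s a|
        = |(∑ a' : A, p s a') * (normPolicy p s a - normPolicy q s a)| := by
          rw [abs_mul, abs_of_nonneg (Finset.sum_nonneg fun a' _ => hp s a')]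
      _ ≤ _ := by
          rw [hsplit]
          refine (abs_add_le _ _).trans_eq ?_
          rw [abs_mul, abs_of_nonneg (hn0 s a), abs_sub_comm (p s a)]
  calc (∑ a : A, p s a) * l1Pol (normPolicy p) (normPolicy q) s
      ≤ ∑ a : A, (|q s a - p s a|
          + |∑ a' : A, q s a' - ∑ a' : A, p s a'| * normPolicy q s a) := by
        rw [l1Pol, Finset.mul_sum]
        exact Finset.sum_le_sum fun a _ => hpoint a
    _ ≤ 2 * ∑ a : A, |q s a - p s a| := by
        rw [Finset.sum_add_distrib, ← Finset.mul_sum, hn1 s]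
        linarith

/-- On states charged by the data, policy extraction normalizes the reweighted data. -/
lemma extractPolicy_behPolicy {S A : Type*} [Fintype A] {dD : S → A → ℝ} (w : S → A → ℝ) {s : S}
    (hs : 0 < ∑ a : A, dD s a) (a : A) :
    extractPolicy (behPolicy dD) w s a = normPolicy (dstar dD w) s a := by
  simp only [extractPolicy, behPolicy, normPolicy, dstar, if_pos hs, ← mul_div_assoc,
    ← Finset.sum_div, div_pos_iff_of_pos_right hs, div_div_div_cancel_right₀ hs.ne']
  congr

/-- The weighted `L¹` norm is at most the weighted `L²` norm under a probability weight. -/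
lemma sum_mul_abs_le_l2nrm {dD : S → A → ℝ} (hd : ∀ s a, 0 ≤ dD s a)
    (hd1 : ∑ s : S, ∑ a : A, dD s a = 1) (g : S → A → ℝ) :
    ∑ s : S, ∑ a : A, dD s a * |g s a| ≤ l2nrm dD g := by
  refine Real.le_sqrt_of_sq_le ?_
  rw [← Fintype.sum_prod_type'] at hd1
  rw [← Fintype.sum_prod_type' (fun s a => dD s a * |g s a|),
    ← Fintype.sum_prod_type' (fun s a => dD s a * g s a ^ 2)]
  have h := Finset.sum_sq_le_sum_mul_sum_of_sq_le_mul Finset.univ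
    (r := fun x : S × A => dD x.1 x.2 * |g x.1 x.2|) (f := fun x => dD x.1 x.2)
    (g := fun x => dD x.1 x.2 * g x.1 x.2 ^ 2) (fun x _ => hd _ _)
    (fun x _ => mul_nonneg (hd _ _) (sq_nonneg _))
    (fun x _ => by rw [mul_pow, sq_abs]; exact le_of_eq (by ring))
  rwa [hd1, one_mul] at h

/-- Lemma 9: policy-extraction error is controlled by the
weighted `L²` error of the density ratio. -/
theorem stmt17
    {S A : Type*} [Fintype S] [Fintype A] [Nonempty A]
    (dD : S → A → ℝ) (hdD0 : ∀ s a, 0 ≤ dD s a)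
    (hdD1 : ∑ s : S, ∑ a : A, dD s a = 1)
    (wst : S → A → ℝ) (hwst0 : ∀ s a, 0 ≤ wst s a)
    (hdst1 : ∑ s : S, ∑ a : A, dstar dD wst s a = 1)
    (what : S → A → ℝ) (hwhat0 : ∀ s a, 0 ≤ what s a) :
    expL1 (dstar dD wst) (normPolicy (dstar dD wst))
        (extractPolicy (behPolicy dD) what)
      ≤ 2 * l2nrm dD (fun s a => what s a - wst s a) := by
  have hp : ∀ s a, 0 ≤ dstar dD wst s a := fun s a => mul_nonneg (hwst0 s a) (hdD0 s a)
  have hq : ∀ s a, 0 ≤ dstar dD what s a := fun s a => mul_nonneg (hwhat0 s a) (hdD0 s a)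
  have habs (s : S) (a : A) : |dstar dD what s a - dstar dD wst s a|
      = dD s a * |what s a - wst s a| := by
    rw [dstar, dstar, ← sub_mul, abs_mul, abs_of_nonneg (hdD0 s a), mul_comm]
  have hstate (s : S) : (∑ a : A, dstar dD wst s a) *
      l1Pol (normPolicy (dstar dD wst)) (extractPolicy (behPolicy dD) what) s
      ≤ 2 * ∑ a : A, dD s a * |what s a - wst s a| := by
    rcases (Finset.sum_nonneg fun a _ => hdD0 s a).eq_or_lt with h0 | hs
    · have hz : ∀ a, dD s a = 0 := fun a =>
        (Finset.sum_eq_zero_iff_of_nonneg fun a' _ => hdD0 s a').1 h0.symm a (Finset.mem_univ a)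
      simp [dstar, hz]
    · have h := sum_mul_l1Pol_normPolicy_le hp hq s
      simp only [habs] at h
      simpa only [l1Pol, extractPolicy_behPolicy what hs] using h
  calc expL1 (dstar dD wst) (normPolicy (dstar dD wst)) (extractPolicy (behPolicy dD) what)
      ≤ ∑ s : S, 2 * ∑ a : A, dD s a * |what s a - wst s a| :=
        Finset.sum_le_sum fun s _ => hstate s
    _ ≤ 2 * l2nrm dD (fun s a => what s a - wst s a) := by
        rw [← Finset.mul_sum]
        exact mul_le_mul_of_nonneg_left (sum_mul_abs_le_l2nrm hdD0 hdD1 _) zero_le_two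
end ProRL
end
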